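/- Let I ≥ 1 and fix for each element i ∈ {1,…,I} a length Δx_i > 0 and a differentiable family u^i : ℝ → P_K, together with interface flux functions g_0, g_1, …, g_I : ℝ → ℝ satisfying the periodicity condition g_0 = g_I. Suppose a quadrature rule with points ξ₀, …, ξ_N ∈ [−1,1] and weights ω*₀, …, ω*_N exact on P_{2K} is given, and that each element satisfies the DGDLS scheme: for all t and all v ∈ P_K, (Δx_i/2) · Σ_{n=0}^N ω*_n (∂_t u^i)(t, ξ_n) v(ξ_n) = Σ_{n=0}^N ω*_n F^i(t, ξ_n) v'(ξ_n) − [ g_i(t) v(1) − g_{i−1}(t) v(−1) ] for some F^i(t,·) ∈ P_K. Then the total mass is conserved: for all t, (d/dt) Σ_{i=1}^I (Δx_i/2) ∫_{−1}^1 u^i(t,ξ) dξ = 0. -/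

import Mathlib

/-! Testing the scheme with the constant `v = 1` removes the volume flux, because `v' = 0`, so the
discrete mass of each element changes only through its two interface fluxes. The fluxes are
single-valued, so they telescope over the elements; exactness of the quadrature on `P_K` already
identifies the discrete mass with the integral of the solution. -/

section Conservation

open Polynomial

variable {ι : Type*} [Fintype ι] {ξ ω : ι → ℝ}

/-- The quadrature rule with nodes `ξ` and weights `ω` integrates polynomials of degree at most `d`
from `a` to `b` exactly. -/
def IsExactQuadrature (ξ ω : ι → ℝ) (a b : ℝ) (d : ℕ) : Prop :=
  ∀ q : ℝ[X], q.degree ≤ d → ∑ n, ω n * q.eval (ξ n) = ∫ x in a..b, q.eval x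

/-- The DGDLS weak form at one instant on an element of length `Δx`, tested against `P_K`. The time
derivative `du` and the flux `F` enter only through their values at the quadrature nodes; `gL` and
`gR` are the numerical fluxes at the left and right interfaces. -/
def DGDLSWeakForm (ξ ω : ι → ℝ) (K : ℕ) (Δx : ℝ) (du F : ι → ℝ) (gL gR : ℝ) : Prop :=
  ∀ v : ℝ[X], v.degree ≤ K →
    Δx / 2 * ∑ n, ω n * du n * v.eval (ξ n) =
      (∑ n, ω n * F n * v.derivative.eval (ξ n)) - (gR * v.eval 1 - gL * v.eval (-1))

theorem IsExactQuadrature.of_le {a b : ℝ} {d d' : ℕ} (h : IsExactQuadrature ξ ω a b d')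
    (hd : d ≤ d') : IsExactQuadrature ξ ω a b d :=
  fun q hq => h q (hq.trans (mod_cast hd))

theorem IsExactQuadrature.hasDerivAt_integral {a b : ℝ} {d : ℕ}
    (h : IsExactQuadrature ξ ω a b d) {p : ℝ → ℝ[X]} (hp : ∀ s, (p s).degree ≤ d)
    {dp : ι → ℝ} {t : ℝ} (hderiv : ∀ n, HasDerivAt (fun s => (p s).eval (ξ n)) (dp n) t) :
    HasDerivAt (fun s => ∫ x in a..b, (p s).eval x) (∑ n, ω n * dp n) t := by
  simp only [← h _ (hp _)]
  exact HasDerivAt.fun_sum fun n _ => (hderiv n).const_mul (ω n)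

theorem DGDLSWeakForm.mass_balance {K : ℕ} {Δx : ℝ} {du F : ι → ℝ} {gL gR : ℝ}
    (h : DGDLSWeakForm ξ ω K Δx du F gL gR) : Δx / 2 * ∑ n, ω n * du n = gL - gR := by
  have hone : (1 : ℝ[X]).degree ≤ K := degree_one_le.trans (mod_cast K.zero_le)
  simpa using h 1 hone

theorem sum_castSucc_sub_succ {G : Type*} [AddCommGroup G] {m : ℕ} (f : Fin (m + 1) → G) :
    ∑ i : Fin m, (f i.castSucc - f i.succ) = f 0 - f (Fin.last m) := by
  rw [Finset.sum_sub_distrib, sub_eq_sub_iff_add_eq_add, ← Fin.sum_univ_castSucc,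
    ← Fin.sum_univ_succ]

theorem dgdls_global_conservation_general {K I : ℕ} (hexact : IsExactQuadrature ξ ω (-1) 1 K)
    {Δx : Fin I → ℝ} {u : Fin I → ℝ → ℝ[X]} (hu : ∀ i s, (u i s).degree ≤ K)
    {t : ℝ} {du F : Fin I → ι → ℝ}
    (hderiv : ∀ i n, HasDerivAt (fun s => (u i s).eval (ξ n)) (du i n) t)
    {g : Fin (I + 1) → ℝ}
    (scheme : ∀ i, DGDLSWeakForm ξ ω K (Δx i) (du i) (F i) (g i.castSucc) (g i.succ)) :
    HasDerivAt (fun s => ∑ i, Δx i / 2 * ∫ x in (-1 : ℝ)..1, (u i s).eval x)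
      (g 0 - g (Fin.last I)) t := by
  have hmass : HasDerivAt (fun s => ∑ i, Δx i / 2 * ∫ x in (-1 : ℝ)..1, (u i s).eval x)
      (∑ i, Δx i / 2 * ∑ n, ω n * du i n) t :=
    HasDerivAt.fun_sum fun i _ => (hexact.hasDerivAt_integral (hu i) (hderiv i)).const_mul _
  have hflux : ∑ i, Δx i / 2 * ∑ n, ω n * du i n = g 0 - g (Fin.last I) := by
    simp only [(scheme _).mass_balance, sum_castSucc_sub_succ]
  rwa [hflux] at hmass

end Conservation

theorem dgdls_global_conservation
    (K N I : ℕ) (hI : 1 ≤ I)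
    (ξ : Fin (N + 1) → ℝ) (hξ : ∀ n, ξ n ∈ Set.Icc (-1 : ℝ) 1)
    (ω : Fin (N + 1) → ℝ)
    (hexact : ∀ q : Polynomial ℝ, q.degree ≤ (2 * K : ℕ) →
      ∑ n : Fin (N + 1), ω n * q.eval (ξ n) = ∫ x in (-1 : ℝ)..1, q.eval x)
    (Δx : Fin I → ℝ) (hΔx : ∀ i, 0 < Δx i)
    (u du : Fin I → ℝ → Polynomial ℝ)
    (hu : ∀ i t, (u i t).degree ≤ K) (hdu : ∀ i t, (du i t).degree ≤ K)
    (hderiv : ∀ i, ∀ t x : ℝ,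
      HasDerivAt (fun s => (u i s).eval x) ((du i t).eval x) t)
    (F : Fin I → ℝ → Polynomial ℝ) (hF : ∀ i t, (F i t).degree ≤ K)
    (g : Fin (I + 1) → ℝ → ℝ) (hper : g 0 = g (Fin.last I))
    (scheme : ∀ i : Fin I, ∀ t : ℝ, ∀ v : Polynomial ℝ, v.degree ≤ K →
      Δx i / 2 * ∑ n : Fin (N + 1), ω n * (du i t).eval (ξ n) * v.eval (ξ n) =
        (∑ n : Fin (N + 1), ω n * (F i t).eval (ξ n) * v.derivative.eval (ξ n)) -
          (g i.succ t * v.eval 1 - g i.castSucc t * v.eval (-1)))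
    (t : ℝ) :
    HasDerivAt
      (fun s => ∑ i : Fin I, Δx i / 2 * ∫ x in (-1 : ℝ)..1, (u i s).eval x)
      0 t := by
  simpa only [hper, sub_self] using dgdls_global_conservation_general
    (F := fun i n => (F i t).eval (ξ n)) (g := (g · t))
    (IsExactQuadrature.of_le hexact (by lia)) hu (fun i n => hderiv i t (ξ n)) (scheme · t)
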